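/- arXiv:2410.09697 — 2 statements merged into one kernel-verified Lean document; each statement's English description precedes it below -/
import Mathlib

section
/- Let m ≥ 4 and let u_m(x) = e^{−d(x,[−m,2m])²/2} / (3m + √(2π)) be the smoothed uniform density on [−m, 2m]. Then u_m satisfies a log-Sobolev inequality with constant 16 m²: for every smooth compactly supported f : ℝ → ℝ, ∫ f² log( f² / ∫ f² u_m dx ) u_m dx ≤ 2 · 16 m² · ∫ (f′)² u_m dx. -/
open MeasureTheory Real

/-- The smoothed uniform density on [−m, 2m]. -/
noncomputable def smUnif (m x : ℝ) : ℝ :=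
  Real.exp (-(Metric.infDist x (Set.Icc (-m) (2 * m))) ^ 2 / 2) / (3 * m + Real.sqrt (2 * Real.pi))

/-!
Tilting by a function of oscillation at most `1 / 2` costs a factor `e^(1/2)` in the log-Sobolev
constant (Holley–Stroock). The potential `dist(x, [-m, 2m])² / 2` lies within such a distance of a
`C¹` potential with curvature at least `1 / (1 + r²)`, where `r = 3m/2` is the half-length of the
interval: spend this small curvature on the interval and a little beyond it, then switch to
curvature `1`.

For a potential `W` of curvature at least `κ`, Bakry–Émery gives the constant `1 / κ`. On a bounded
interval, transport `f² e^(-W)` monotonically to the multiple of `e^(-W)` of the same mass.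
Integrating the derivative of `f² e^(-W) (T - id)`, which vanishes at both ends, and bounding the
integrand by the strong convexity of `W` and `log s ≤ s - 1` gives the inequality. Exhausting the
line by bounded intervals finishes the proof.
-/

open Set Filter Topology InformationTheory

section Entropy

variable {α : Type*} [MeasurableSpace α] {μ : Measure α} {g : α → ℝ} {t : ℝ}

/-- The entropy `Ent_μ(g)` of a nonnegative function. Dividing by the average rather than by the
integral makes it homogeneous in `μ`, hence meaningful for every finite measure. -/
noncomputable def entropy (μ : Measure α) (g : α → ℝ) : ℝ :=
  ∫ x, g x * log (g x / ⨍ y, g y ∂μ) ∂μ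

lemma mul_log_div_eq_sub (x : ℝ) (ht : t ≠ 0) :
    x * log (x / t) = x * log x - log t * x := by
  rcases eq_or_ne x 0 with rfl | hx
  · simp
  · rw [log_div hx ht]; ring

lemma mul_klFun_div_eq_sub (x : ℝ) (ht : t ≠ 0) :
    t * klFun (x / t) = x * log x - log t * x + t - x := by
  rw [← mul_log_div_eq_sub x ht, klFun_apply]
  field_simp

lemma integral_mul_log_div (hg : Integrable g μ) (hlog : Integrable (fun x ↦ g x * log (g x)) μ)
    (ht : t ≠ 0) :
    ∫ x, g x * log (g x / t) ∂μ = ∫ x, g x * log (g x) ∂μ - log t * ∫ x, g x ∂μ := by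
  simp only [mul_log_div_eq_sub _ ht]
  rw [integral_sub hlog (hg.const_mul _), integral_const_mul]

variable [IsFiniteMeasure μ]

lemma integral_mul_klFun_div (hg : Integrable g μ)
    (hlog : Integrable (fun x ↦ g x * log (g x)) μ) (ht : t ≠ 0) :
    ∫ x, t * klFun (g x / t) ∂μ =
      ∫ x, g x * log (g x) ∂μ - log t * ∫ x, g x ∂μ + t * μ.real univ - ∫ x, g x ∂μ := by
  simp only [mul_klFun_div_eq_sub _ ht]
  rw [integral_sub (by fun_prop) hg, integral_add (by fun_prop) (integrable_const t),
    integral_sub hlog (by fun_prop), integral_const_mul, integral_const, smul_eq_mul, mul_comm t]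

lemma integrable_mul_klFun_div (hg : Integrable g μ)
    (hlog : Integrable (fun x ↦ g x * log (g x)) μ) (ht : t ≠ 0) :
    Integrable (fun x ↦ t * klFun (g x / t)) μ := by
  simp only [mul_klFun_div_eq_sub _ ht]
  fun_prop

lemma entropy_eq_sub (hg0 : 0 ≤ g) (hg : Integrable g μ)
    (hlog : Integrable (fun x ↦ g x * log (g x)) μ) :
    entropy μ g =
      ∫ x, g x * log (g x) ∂μ - μ.real univ * ((⨍ x, g x ∂μ) * log (⨍ x, g x ∂μ)) := by
  have hmass : μ.real univ * ⨍ x, g x ∂μ = ∫ x, g x ∂μ := measure_smul_average μ g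
  rcases eq_or_ne (⨍ x, g x ∂μ) 0 with h | h
  · have hzero : g =ᵐ[μ] 0 := (integral_eq_zero_iff_of_nonneg hg0 hg).1 (by simp [← hmass, h])
    have : ∫ x, g x * log (g x) ∂μ = 0 :=
      integral_eq_zero_of_ae (hzero.mono fun x hx ↦ by simp [hx])
    simp [entropy, h, this]
  · rw [entropy, integral_mul_log_div hg hlog h, ← hmass]
    ring

lemma entropy_eq_integral_mul_klFun (hg : Integrable g μ)
    (hlog : Integrable (fun x ↦ g x * log (g x)) μ) (h : ⨍ x, g x ∂μ ≠ 0) :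
    entropy μ g = ∫ x, (⨍ y, g y ∂μ) * klFun (g x / ⨍ y, g y ∂μ) ∂μ := by
  have hmass : μ.real univ * ⨍ x, g x ∂μ = ∫ x, g x ∂μ := measure_smul_average μ g
  rw [entropy, integral_mul_log_div hg hlog h, integral_mul_klFun_div hg hlog h]
  linarith

lemma entropy_le_integral_mul_klFun (hg0 : 0 ≤ g) (hg : Integrable g μ)
    (hlog : Integrable (fun x ↦ g x * log (g x)) μ) (ht : 0 < t) :
    entropy μ g ≤ ∫ x, t * klFun (g x / t) ∂μ := by
  have hmass : μ.real univ * ⨍ x, g x ∂μ = ∫ x, g x ∂μ := measure_smul_average μ g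
  have havg : 0 ≤ ⨍ x, g x ∂μ := integral_nonneg hg0
  have hgap : 0 ≤ μ.real univ * (t * klFun ((⨍ x, g x ∂μ) / t)) :=
    mul_nonneg measureReal_nonneg (mul_nonneg ht.le (klFun_nonneg (by positivity)))
  calc entropy μ g
    _ ≤ entropy μ g + μ.real univ * (t * klFun ((⨍ x, g x ∂μ) / t)) :=
      le_add_of_nonneg_right hgap
    _ = ∫ x, t * klFun (g x / t) ∂μ := by
      rw [entropy_eq_sub hg0 hg hlog, integral_mul_klFun_div hg hlog ht.ne',
        mul_klFun_div_eq_sub _ ht.ne', ← hmass]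
      ring

lemma tendsto_entropy_restrict {ι : Type*} {l : Filter ι} [l.IsCountablyGenerated] {s : ι → Set α}
    (hs : AECover μ l s) (hg0 : 0 ≤ g) (hg : Integrable g μ)
    (hlog : Integrable (fun x ↦ g x * log (g x)) μ) :
    Tendsto (fun i ↦ entropy (μ.restrict (s i)) g) l (𝓝 (entropy μ g)) := by
  rcases eq_zero_or_neZero μ with rfl | _
  · simpa [entropy] using tendsto_const_nhds
  have hmass : Tendsto (fun i ↦ (μ.restrict (s i)).real univ) l (𝓝 (μ.real univ)) := by
    simpa using hs.integral_tendsto_of_countably_generated (integrable_const (1 : ℝ))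
  have haverage : Tendsto (fun i ↦ ⨍ x in s i, g x ∂μ) l (𝓝 (⨍ x, g x ∂μ)) := by
    simp only [average_eq, smul_eq_mul]
    exact (hmass.inv₀ measureReal_univ_ne_zero).mul
      (hs.integral_tendsto_of_countably_generated hg)
  simp only [entropy_eq_sub hg0 hg hlog, entropy_eq_sub hg0 hg.restrict hlog.restrict]
  exact (hs.integral_tendsto_of_countably_generated hlog).sub
    (hmass.mul ((continuous_mul_log.tendsto _).comp haverage))

end Entropy

section Tilted

variable {α : Type*} [MeasurableSpace α] {μ : Measure α} {φ g : α → ℝ} {p q : ℝ}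

lemma integral_tilted_le (hφ : ∀ x, φ x ≤ q) (hg0 : 0 ≤ g) (hg : Integrable g μ) :
    ∫ x, g x ∂μ.tilted φ ≤ exp q / (∫ x, exp (φ x) ∂μ) * ∫ x, g x ∂μ := by
  rw [integral_tilted, ← integral_const_mul]
  refine integral_mono_of_nonneg (ae_of_all _ fun x ↦ ?_) (hg.const_mul _)
    (ae_of_all _ fun x ↦ ?_)
  · exact mul_nonneg (by positivity) (hg0 x)
  · have := hg0 x
    have := hφ x
    simp only [smul_eq_mul]
    gcongr

lemma le_integral_tilted (hφ : ∀ x, p ≤ φ x) (hexp : Integrable (fun x ↦ exp (φ x)) μ)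
    (hg0 : 0 ≤ g) (hg : Integrable g (μ.tilted φ)) :
    exp p / (∫ x, exp (φ x) ∂μ) * ∫ x, g x ∂μ ≤ ∫ x, g x ∂μ.tilted φ := by
  rw [integral_tilted, ← integral_const_mul]
  refine integral_mono_of_nonneg (ae_of_all _ fun x ↦ ?_) ?_ (ae_of_all _ fun x ↦ ?_)
  · exact mul_nonneg (by positivity) (hg0 x)
  · simpa [div_mul_eq_mul_div] using ((integrable_tilted_iff hexp g).1 hg).div_const _
  · have := hg0 x
    have := hφ x
    simp only [smul_eq_mul]
    gcongr

end Tilted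

section LogSobolev

/-- The log-Sobolev inequality with constant `C` for a measure on the line. Compactly supported
test functions suffice also for measures carried by a bounded interval, on which every `C¹`
function agrees with one of them. -/
def SatisfiesLogSobolev (μ : Measure ℝ) (C : ℝ) : Prop :=
  ∀ f : ℝ → ℝ, ContDiff ℝ 1 f → HasCompactSupport f →
    entropy μ (fun x ↦ f x ^ 2) ≤ 2 * C * ∫ x, deriv f x ^ 2 ∂μ

variable {μ ν : Measure ℝ} {C : ℝ}

section Integrability

variable [IsFiniteMeasureOnCompacts μ] {f : ℝ → ℝ}

lemma integrable_comp_of_hasCompactSupport {φ : ℝ → ℝ} (hφ : Continuous φ) (h0 : φ 0 = 0)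
    (hf : Continuous f) (hcs : HasCompactSupport f) : Integrable (fun x ↦ φ (f x)) μ := by
  have hsupp : HasCompactSupport fun x ↦ φ (f x) := hcs.comp_left h0
  exact (hφ.comp hf).integrable_of_hasCompactSupport hsupp

lemma integrable_sq_of_hasCompactSupport (hf : Continuous f) (hcs : HasCompactSupport f) :
    Integrable (fun x ↦ f x ^ 2) μ :=
  integrable_comp_of_hasCompactSupport (φ := fun y ↦ y ^ 2) (by fun_prop) (by simp) hf hcs

lemma integrable_sq_mul_log_sq_of_hasCompactSupport (hf : Continuous f)
    (hcs : HasCompactSupport f) : Integrable (fun x ↦ f x ^ 2 * log (f x ^ 2)) μ :=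
  integrable_comp_of_hasCompactSupport (φ := fun y ↦ y ^ 2 * log (y ^ 2))
    (continuous_mul_log.comp (continuous_pow 2)) (by simp) hf hcs

lemma integrable_deriv_sq_of_hasCompactSupport (hf : ContDiff ℝ 1 f) (hcs : HasCompactSupport f) :
    Integrable (fun x ↦ deriv f x ^ 2) μ :=
  integrable_sq_of_hasCompactSupport (hf.continuous_deriv le_rfl) hcs.deriv

end Integrability

theorem satisfiesLogSobolev_of_aecover [IsFiniteMeasure μ] {ι : Type*} {l : Filter ι} [l.NeBot]
    [l.IsCountablyGenerated] {s : ι → Set ℝ} (hs : AECover μ l s)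
    (h : ∀ i, SatisfiesLogSobolev (μ.restrict (s i)) C) : SatisfiesLogSobolev μ C := by
  intro f hf hcs
  refine le_of_tendsto_of_tendsto' (tendsto_entropy_restrict hs (fun x ↦ sq_nonneg (f x))
    (integrable_sq_of_hasCompactSupport hf.continuous hcs)
    (integrable_sq_mul_log_sq_of_hasCompactSupport hf.continuous hcs))
    ((hs.integral_tendsto_of_countably_generated
      (integrable_deriv_sq_of_hasCompactSupport hf hcs)).const_mul (2 * C)) fun i ↦ h i f hf hcs

/-- The **Holley–Stroock perturbation principle**. -/
theorem SatisfiesLogSobolev.tilted [IsFiniteMeasure ν] {φ : ℝ → ℝ} {p q : ℝ}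
    (h : SatisfiesLogSobolev ν C) (hC : 0 ≤ C) (hφ : Measurable φ) (hp : ∀ x, p ≤ φ x)
    (hq : ∀ x, φ x ≤ q) : SatisfiesLogSobolev (ν.tilted φ) (exp (q - p) * C) := by
  intro f hf hcs
  have hsq : 0 ≤ fun x ↦ f x ^ 2 := fun x ↦ sq_nonneg (f x)
  have hsqi (ρ : Measure ℝ) [IsFiniteMeasure ρ] : Integrable (fun x ↦ f x ^ 2) ρ :=
    integrable_sq_of_hasCompactSupport hf.continuous hcs
  have hlog (ρ : Measure ℝ) [IsFiniteMeasure ρ] :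
      Integrable (fun x ↦ f x ^ 2 * log (f x ^ 2)) ρ :=
    integrable_sq_mul_log_sq_of_hasCompactSupport hf.continuous hcs
  have hexp : Integrable (fun x ↦ exp (φ x)) ν :=
    .of_bound (by fun_prop) (exp q) (ae_of_all _ fun x ↦ by simpa using hq x)
  set Z := ∫ x, exp (φ x) ∂ν
  set t := ⨍ x, f x ^ 2 ∂ν with ht
  have ht0 : 0 ≤ t := integral_nonneg hsq
  have hentropy : entropy (ν.tilted φ) (fun x ↦ f x ^ 2) ≤
      exp q / Z * entropy ν (fun x ↦ f x ^ 2) := by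
    rcases ht0.eq_or_lt with h0 | hpos
    · have hν : ∫ x, f x ^ 2 ∂ν = 0 := by
        rw [← measure_smul_average, ← ht, ← h0, smul_zero]
      have htilted : ∫ x, f x ^ 2 ∂ν.tilted φ = 0 :=
        le_antisymm (by simpa [hν] using integral_tilted_le hq hsq (hsqi ν)) (integral_nonneg hsq)
      simp [entropy, average_eq, hν, htilted]
    · rw [entropy_eq_integral_mul_klFun (hsqi ν) (hlog ν) hpos.ne', ← ht]
      exact (entropy_le_integral_mul_klFun hsq (hsqi _) (hlog _) hpos).trans <|
        integral_tilted_le hq (fun x ↦ mul_nonneg ht0 (klFun_nonneg (by positivity)))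
          (integrable_mul_klFun_div (hsqi ν) (hlog ν) hpos.ne')
  have henergy : exp p / Z * ∫ x, deriv f x ^ 2 ∂ν ≤ ∫ x, deriv f x ^ 2 ∂ν.tilted φ :=
    le_integral_tilted hp hexp (fun x ↦ sq_nonneg _)
      (integrable_deriv_sq_of_hasCompactSupport hf hcs)
  calc entropy (ν.tilted φ) (fun x ↦ f x ^ 2)
    _ ≤ exp q / Z * entropy ν (fun x ↦ f x ^ 2) := hentropy
    _ ≤ exp q / Z * (2 * C * ∫ x, deriv f x ^ 2 ∂ν) := by gcongr; exact h f hf hcs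
    _ = 2 * (exp (q - p) * C) * (exp p / Z * ∫ x, deriv f x ^ 2 ∂ν) := by
      rw [exp_sub]; field_simp
    _ ≤ 2 * (exp (q - p) * C) * ∫ x, deriv f x ^ 2 ∂ν.tilted φ := by gcongr

end LogSobolev

section Transport

variable {p q : ℝ → ℝ} {a b : ℝ}

/-- The monotone rearrangement `T` of `p` into `q`. -/
theorem exists_hasDerivAt_div_comp_of_integral_eq (hp : Continuous p) (hp0 : ∀ x, 0 ≤ p x)
    (hq : Continuous q) (hq0 : ∀ x, 0 < q x) (hab : a ≤ b)
    (h : ∫ x in a..b, p x = ∫ x in a..b, q x) :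
    ∃ T : ℝ → ℝ, T a = a ∧ T b = b ∧ ∀ x ∈ Icc a b, HasDerivAt T (p x / q (T x)) x := by
  set G : ℝ → ℝ := fun y ↦ ∫ x in a..y, q x with hG
  set H : ℝ → ℝ := fun y ↦ ∫ x in a..y, p x with hH
  have hG' (y : ℝ) : HasStrictDerivAt G (q y) y := hq.integral_hasStrictDerivAt a y
  have hH' (y : ℝ) : HasStrictDerivAt H (p y) y := hp.integral_hasStrictDerivAt a y
  have hGmono : StrictMono G := strictMono_of_hasDerivAt_pos (fun y ↦ (hG' y).hasDerivAt) hq0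
  have hHmono : Monotone H := monotone_of_hasDerivAt_nonneg (fun y ↦ (hH' y).hasDerivAt) hp0
  have hGinv (y : ℝ) : Function.invFun G (G y) = y :=
    Function.leftInverse_invFun hGmono.injective y
  have hHa : H a = G a := by simp [hG, hH]
  have hHb : H b = G b := h
  refine ⟨fun x ↦ Function.invFun G (H x), by simp [hHa, hGinv], by simp [hHb, hGinv],
    fun x hx ↦ ?_⟩
  obtain ⟨y, -, hy⟩ : H x ∈ G '' Icc a b :=
    intermediate_value_Icc hab (fun y _ ↦ (hG' y).hasDerivAt.continuousAt.continuousWithinAt)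
      ⟨hHa ▸ hHmono hx.1, hHb ▸ hHmono hx.2⟩
  have hinv : HasStrictDerivAt (Function.invFun G) (q y)⁻¹ (H x) :=
    hy ▸ (hG' y).to_local_left_inverse (hq0 y).ne' (.of_forall hGinv)
  have hTx : Function.invFun G (H x) = y := by rw [← hy, hGinv]
  simp only [hTx, div_eq_inv_mul]
  exact hinv.hasDerivAt.comp x (hH' x).hasDerivAt

lemma exists_integral_deriv_mul_displacement_add_eq_zero {p' : ℝ → ℝ}
    (hp : ∀ x, HasDerivAt p (p' x) x) (hp' : Continuous p') (hp0 : ∀ x, 0 ≤ p x)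
    (hq : Continuous q) (hq0 : ∀ x, 0 < q x) (hab : a ≤ b)
    (h : ∫ x in a..b, p x = ∫ x in a..b, q x) :
    ∃ T : ℝ → ℝ, ContinuousOn T (uIcc a b) ∧
      ∫ x in a..b, (p' x * (T x - x) + p x * (p x / q (T x) - 1)) = 0 := by
  have hpc : Continuous p := continuous_iff_continuousAt.2 fun x ↦ (hp x).continuousAt
  obtain ⟨T, hTa, hTb, hT⟩ :=
    exists_hasDerivAt_div_comp_of_integral_eq hpc hp0 hq hq0 hab h
  rw [← uIcc_of_le hab] at hT
  have hTc : ContinuousOn T (uIcc a b) := fun x hx ↦ (hT x hx).continuousAt.continuousWithinAt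
  have hT'c : ContinuousOn (fun x ↦ p x / q (T x) - 1) (uIcc a b) :=
    (hpc.continuousOn.div (hq.comp_continuousOn hTc) fun x _ ↦ (hq0 _).ne').sub continuousOn_const
  have hδ (x : ℝ) (hx : x ∈ uIcc a b) :
      HasDerivAt (fun x ↦ T x - x) (p x / q (T x) - 1) x := (hT x hx).sub (hasDerivAt_id x)
  refine ⟨T, hTc, ?_⟩
  rw [intervalIntegral.integral_deriv_mul_eq_sub (fun x _ ↦ hp x) hδ
    (hp'.intervalIntegrable a b) hT'c.intervalIntegrable]
  simp [hTa, hTb]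

end Transport

section BakryEmery

variable {s : Set ℝ} {W : ℝ → ℝ} {κ W' x y : ℝ}

lemma add_mul_sub_le_of_convexOn (hW : ConvexOn ℝ s W) (hx : x ∈ s) (hy : y ∈ s)
    (hderiv : HasDerivAt W W' x) : W x + W' * (y - x) ≤ W y := by
  rcases lt_trichotomy x y with hxy | rfl | hxy
  · have := hW.le_slope_of_hasDerivAt hx hy hxy hderiv
    rw [slope_def_field, le_div_iff₀ (sub_pos.2 hxy)] at this
    linarith
  · simp
  · have := hW.slope_le_of_hasDerivAt hy hx hxy hderiv
    rw [slope_def_field, div_le_iff₀ (sub_pos.2 hxy)] at this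
    linarith

lemma add_mul_sub_add_mul_sq_le_of_strongConvexOn (hW : StrongConvexOn s κ W) (hx : x ∈ s)
    (hy : y ∈ s) (hderiv : HasDerivAt W W' x) :
    W x + W' * (y - x) + κ / 2 * (y - x) ^ 2 ≤ W y := by
  have hconv : ConvexOn ℝ s fun z ↦ W z - κ / 2 * z ^ 2 := by
    simpa using strongConvexOn_iff_convex.1 hW
  have hderiv' : HasDerivAt (fun z ↦ W z - κ / 2 * z ^ 2) (W' - κ * x) x :=
    (hderiv.sub (((hasDerivAt_id x).pow 2).const_mul (κ / 2))).congr_deriv (by simp; ring)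
  linear_combination add_mul_sub_le_of_convexOn hconv hx hy hderiv'

/-- Here `u`, `u'` are the values of `f` and `f'` at `x`, and `δ` is the displacement `T x - x`. -/
lemma sq_mul_log_div_le {u u' δ c w w' v : ℝ} (hκ : 0 < κ) (hc : 0 < c)
    (h : w + w' * δ + κ / 2 * δ ^ 2 ≤ v) :
    u ^ 2 * log (u ^ 2 / c) ≤
      (2 * u * u' - u ^ 2 * w') * δ + u ^ 2 * (u ^ 2 / c * exp (v - w) - 1) + 2 / κ * u' ^ 2 := by
  have hsquare : 0 ≤ 2 / κ * u' ^ 2 + 2 * u * u' * δ + κ / 2 * u ^ 2 * δ ^ 2 :=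
    calc 0 ≤ 2 / κ * (u' + κ / 2 * u * δ) ^ 2 := by positivity
      _ = _ := by field_simp; ring
  rcases eq_or_ne u 0 with rfl | hu
  · simp only [ne_eq, OfNat.ofNat_ne_zero, not_false_eq_true, zero_pow, zero_mul, mul_zero] at *
    linarith
  have hlog : log (u ^ 2 / c) + (v - w) ≤ u ^ 2 / c * exp (v - w) - 1 := by
    have := log_le_sub_one_of_pos (x := u ^ 2 / c * exp (v - w)) (by positivity)
    rwa [log_mul (by positivity) (exp_ne_zero _), log_exp] at this
  have htangent : log (u ^ 2 / c) ≤ u ^ 2 / c * exp (v - w) - 1 - w' * δ - κ / 2 * δ ^ 2 := by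
    linarith
  linear_combination u ^ 2 * htangent + hsquare

theorem integral_sq_mul_log_le_of_strongConvexOn {f : ℝ → ℝ} {a b c : ℝ} (hκ : 0 < κ)
    (hW : ContDiff ℝ 1 W) (hconv : StrongConvexOn univ κ W) (hf : ContDiff ℝ 1 f) (hab : a ≤ b)
    (hc : 0 < c) (hmass : ∫ x in a..b, f x ^ 2 * exp (-W x) = c * ∫ x in a..b, exp (-W x)) :
    ∫ x in a..b, f x ^ 2 * log (f x ^ 2 / c) * exp (-W x) ≤
      2 / κ * ∫ x in a..b, deriv f x ^ 2 * exp (-W x) := by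
  have hWd (x : ℝ) : HasDerivAt W (deriv W x) x := (hW.differentiable one_ne_zero x).hasDerivAt
  have hfd (x : ℝ) : HasDerivAt f (deriv f x) x := (hf.differentiable one_ne_zero x).hasDerivAt
  have hfc := hf.continuous
  have := hW.continuous
  have := hW.continuous_deriv le_rfl
  have := hf.continuous_deriv le_rfl
  set ρ' : ℝ → ℝ := fun x ↦ (2 * f x * deriv f x - f x ^ 2 * deriv W x) * exp (-W x)
  have hρ (x : ℝ) : HasDerivAt (fun x ↦ f x ^ 2 * exp (-W x)) (ρ' x) x :=
    (((hfd x).pow 2).mul (hWd x).neg.exp).congr_deriv (by simp [ρ']; ring)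
  obtain ⟨T, hTc, hT⟩ := exists_integral_deriv_mul_displacement_add_eq_zero
    (q := fun x ↦ c * exp (-W x)) hρ (by fun_prop) (fun x ↦ by positivity) (by fun_prop)
    (fun x ↦ by positivity) hab (by simpa using hmass)
  have hdensity (x : ℝ) : f x ^ 2 * exp (-W x) / (c * exp (-W (T x))) =
      f x ^ 2 / c * exp (W (T x) - W x) := by
    simp only [exp_sub, exp_neg]
    field_simp
  simp only [hdensity] at hT
  have hD : ContinuousOn (fun x ↦ ρ' x * (T x - x) +
      f x ^ 2 * exp (-W x) * (f x ^ 2 / c * exp (W (T x) - W x) - 1)) (uIcc a b) := by fun_prop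
  have hlog : Continuous fun x ↦ f x ^ 2 * log (f x ^ 2 / c) * exp (-W x) := by
    simp only [mul_log_div_eq_sub _ hc.ne']
    have := continuous_mul_log.comp (hfc.pow 2)
    fun_prop
  have henergy : IntervalIntegrable (fun x ↦ 2 / κ * (deriv f x ^ 2 * exp (-W x))) volume a b :=
    Continuous.intervalIntegrable (by fun_prop) a b
  rw [← intervalIntegral.integral_const_mul,
    ← zero_add (∫ x in a..b, 2 / κ * (deriv f x ^ 2 * exp (-W x))), ← hT,
    ← intervalIntegral.integral_add hD.intervalIntegrable henergy]
  refine intervalIntegral.integral_mono_on hab (hlog.intervalIntegrable a b)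
    (hD.intervalIntegrable.add henergy) fun x _ ↦ ?_
  have hpointwise := sq_mul_log_div_le (u := f x) (u' := deriv f x) hκ hc <|
    add_mul_sub_add_mul_sq_le_of_strongConvexOn hconv (mem_univ x) (mem_univ (T x)) (hWd x)
  linear_combination exp (-W x) * hpointwise

end BakryEmery

section StronglyLogConcave

variable {W : ℝ → ℝ} {κ : ℝ}

lemma integrable_exp_neg_of_strongConvexOn (hκ : 0 < κ) (hW : Differentiable ℝ W)
    (hconv : StrongConvexOn univ κ W) : Integrable fun x ↦ exp (-W x) := by
  have hgauss : Integrable fun x : ℝ ↦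
      exp (-W 0 + deriv W 0 ^ 2 / κ) * exp (-(κ / 4) * x ^ 2) :=
    (integrable_exp_neg_mul_sq (by positivity)).const_mul _
  have := hW.continuous
  refine hgauss.mono' (by fun_prop) (ae_of_all _ fun x ↦ ?_)
  rw [norm_of_nonneg (exp_pos _).le, ← exp_add, exp_le_exp]
  have htangent := add_mul_sub_add_mul_sq_le_of_strongConvexOn hconv (mem_univ 0) (mem_univ x)
    (hW 0).hasDerivAt
  have hsquare : 0 ≤ κ / 4 * x ^ 2 + deriv W 0 * x + deriv W 0 ^ 2 / κ :=
    calc 0 ≤ κ / 4 * (x + 2 * deriv W 0 / κ) ^ 2 := by positivity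
      _ = _ := by field_simp; ring
  linear_combination htangent + hsquare

lemma satisfiesLogSobolev_tilted_restrict_Ioc_of_strongConvexOn (hκ : 0 < κ)
    (hW : ContDiff ℝ 1 W) (hconv : StrongConvexOn univ κ W) {a b : ℝ} (hab : a ≤ b) :
    SatisfiesLogSobolev ((volume.tilted fun x ↦ -W x).restrict (Ioc a b)) κ⁻¹ := by
  intro f hf _
  set ρ := (volume.tilted fun x ↦ -W x).restrict (Ioc a b)
  have hZ : 0 < ∫ x, exp (-W x) := integral_exp_pos <|
    integrable_exp_neg_of_strongConvexOn hκ (hW.differentiable one_ne_zero) hconv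
  set Z := ∫ x, exp (-W x)
  have hρ (g : ℝ → ℝ) : ∫ x, g x ∂ρ = Z⁻¹ * ∫ x in a..b, g x * exp (-W x) := by
    rw [setIntegral_tilted' _ _ measurableSet_Ioc, intervalIntegral.integral_of_le hab,
      ← integral_const_mul]
    simp only [smul_eq_mul]
    congr with x
    ring
  set c := ⨍ x, f x ^ 2 ∂ρ with hc
  have hc0 : 0 ≤ c := integral_nonneg fun x ↦ sq_nonneg (f x)
  rcases hc0.eq_or_lt with h0 | hpos
  · have : 0 ≤ ∫ x, deriv f x ^ 2 ∂ρ := integral_nonneg fun x ↦ sq_nonneg _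
    simp only [entropy, ← hc, ← h0, div_zero, log_zero, mul_zero, integral_zero]
    positivity
  have hmass : ∫ x in a..b, f x ^ 2 * exp (-W x) = c * ∫ x in a..b, exp (-W x) := by
    have havg : (∫ _, (1 : ℝ) ∂ρ) * c = ∫ x, f x ^ 2 ∂ρ := by
      simpa using measure_smul_average ρ fun x ↦ f x ^ 2
    rw [hρ, hρ] at havg
    field_simp at havg
    linear_combination -havg
  calc entropy ρ (fun x ↦ f x ^ 2)
    _ = Z⁻¹ * ∫ x in a..b, f x ^ 2 * log (f x ^ 2 / c) * exp (-W x) := hρ _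
    _ ≤ Z⁻¹ * (2 / κ * ∫ x in a..b, deriv f x ^ 2 * exp (-W x)) := by
      gcongr
      exact integral_sq_mul_log_le_of_strongConvexOn hκ hW hconv hf hab hpos hmass
    _ = 2 * κ⁻¹ * ∫ x, deriv f x ^ 2 ∂ρ := by rw [hρ]; ring

/-- The **Bakry–Émery criterion** on the line. -/
theorem satisfiesLogSobolev_tilted_of_strongConvexOn (hκ : 0 < κ) (hW : ContDiff ℝ 1 W)
    (hconv : StrongConvexOn univ κ W) :
    SatisfiesLogSobolev (volume.tilted fun x ↦ -W x) κ⁻¹ :=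
  satisfiesLogSobolev_of_aecover
    (aecover_Ioc (tendsto_neg_atTop_atBot.comp tendsto_natCast_atTop_atTop)
      tendsto_natCast_atTop_atTop)
    fun n : ℕ ↦ satisfiesLogSobolev_tilted_restrict_Ioc_of_strongConvexOn hκ hW hconv
      (neg_le_self n.cast_nonneg)

end StronglyLogConcave

section MaxSq

lemma hasDerivAt_max_zero_sq (t : ℝ) : HasDerivAt (fun y ↦ max y 0 ^ 2) (2 * max t 0) t := by
  rw [hasDerivAt_iff_isLittleO]
  have hquadratic (y : ℝ) :
      ‖max y 0 ^ 2 - max t 0 ^ 2 - (y - t) • (2 * max t 0)‖ ≤ 1 * ‖(y - t) ^ 2‖ := by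
    rw [norm_of_nonneg (sq_nonneg (y - t)), one_mul, norm_eq_abs, smul_eq_mul, abs_le]
    rcases le_total y 0 with hy | hy <;> rcases le_total t 0 with ht | ht <;>
      simp only [max_eq_left, max_eq_right, hy, ht] <;> constructor <;> nlinarith
  exact (Asymptotics.IsBigO.of_bound 1 (.of_forall hquadratic)).trans_isLittleO
    (by simpa using Asymptotics.isLittleO_pow_sub_sub t one_lt_two)

lemma contDiff_max_zero_sq : ContDiff ℝ 1 fun y : ℝ ↦ max y 0 ^ 2 := by
  refine contDiff_one_iff_deriv.2 ⟨fun t ↦ (hasDerivAt_max_zero_sq t).differentiableAt, ?_⟩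
  have hderiv : (deriv fun y : ℝ ↦ max y 0 ^ 2) = fun t ↦ 2 * max t 0 :=
    funext fun t ↦ (hasDerivAt_max_zero_sq t).deriv
  rw [hderiv]
  fun_prop

lemma max_abs_sub_zero_sq {R : ℝ} (hR : 0 ≤ R) (y : ℝ) :
    max (|y| - R) 0 ^ 2 = max (y - R) 0 ^ 2 + max (-y - R) 0 ^ 2 := by
  rcases le_total 0 y with hy | hy
  · rw [abs_of_nonneg hy, max_eq_right (by linarith : -y - R ≤ 0)]
    ring
  · rw [abs_of_nonpos hy, max_eq_right (by linarith : y - R ≤ 0)]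
    ring

lemma convexOn_max_abs_sub_zero_sq (R : ℝ) : ConvexOn ℝ univ fun y : ℝ ↦ max (|y| - R) 0 ^ 2 :=
  (ConvexOn.sup (convexOn_univ_norm.add_const (-R)) (convexOn_const 0 convex_univ)).pow
    (fun _ _ ↦ le_max_right _ _) 2

end MaxSq

section ComparisonPotential

lemma strongConvexOn_comp_sub_const {W : ℝ → ℝ} {κ : ℝ} (hW : StrongConvexOn univ κ W) (c : ℝ) :
    StrongConvexOn univ κ fun x ↦ W (x - c) := by
  refine ⟨convex_univ, fun x _ y _ a b ha hb hab ↦ ?_⟩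
  have h := hW.2 (mem_univ (x - c)) (mem_univ (y - c)) ha hb hab
  have hcomb : a • (x - c) + b • (y - c) = a • x + b • y - c := by
    simp only [smul_eq_mul]
    linear_combination -c * hab
  rwa [hcomb, sub_sub_sub_cancel_right] at h

/-- A `C¹` potential with curvature `1 / (1 + r ^ 2)` where `|r * x| ≤ 1 + r ^ 2` and `1` beyond.
These parameters are the ones for which its distance to `max (|x| - r) 0 ^ 2 / 2`, which is flat
on `[-r, r]`, does not depend on `r`. -/
noncomputable def comparisonPotential (r x : ℝ) : ℝ :=
  (x ^ 2 + max (|r * x| - (1 + r ^ 2)) 0 ^ 2) / (2 * (1 + r ^ 2))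

variable {r : ℝ}

lemma contDiff_comparisonPotential (r : ℝ) : ContDiff ℝ 1 (comparisonPotential r) := by
  unfold comparisonPotential
  simp only [max_abs_sub_zero_sq (by positivity : 0 ≤ 1 + r ^ 2)]
  have h₁ : ContDiff ℝ 1 fun x ↦ max (r * x - (1 + r ^ 2)) 0 ^ 2 :=
    contDiff_max_zero_sq.comp (by fun_prop : ContDiff ℝ 1 fun x ↦ r * x - (1 + r ^ 2))
  have h₂ : ContDiff ℝ 1 fun x ↦ max (-(r * x) - (1 + r ^ 2)) 0 ^ 2 :=
    contDiff_max_zero_sq.comp (by fun_prop : ContDiff ℝ 1 fun x ↦ -(r * x) - (1 + r ^ 2))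
  fun_prop

lemma strongConvexOn_comparisonPotential (r : ℝ) :
    StrongConvexOn univ (1 + r ^ 2)⁻¹ (comparisonPotential r) := by
  have hconv : ConvexOn ℝ univ fun x ↦ max (|r * x| - (1 + r ^ 2)) 0 ^ 2 :=
    (convexOn_max_abs_sub_zero_sq _).comp_linearMap (LinearMap.mulLeft ℝ r)
  have hdiff : (fun x ↦ comparisonPotential r x - (1 + r ^ 2)⁻¹ / 2 * ‖x‖ ^ 2) =
      fun x ↦ (2 * (1 + r ^ 2))⁻¹ • max (|r * x| - (1 + r ^ 2)) 0 ^ 2 := by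
    ext x
    simp only [comparisonPotential, norm_eq_abs, sq_abs, smul_eq_mul]
    field_simp
    ring
  rw [strongConvexOn_iff_convex, hdiff]
  exact hconv.smul (by positivity)

lemma comparisonPotential_le (hr : 0 ≤ r) (x : ℝ) :
    comparisonPotential r x ≤ max (|x| - r) 0 ^ 2 / 2 + 1 / 2 := by
  rw [comparisonPotential, ← sq_abs x, abs_mul, abs_of_nonneg hr, div_le_iff₀ (by positivity)]
  have hx := abs_nonneg x
  generalize |x| = t at *
  rcases le_total t r with ht | ht
  · have hrt : r * t ≤ r * r := by gcongr
    rw [max_eq_right (by linarith : r * t - (1 + r ^ 2) ≤ 0),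
      max_eq_right (by linarith : t - r ≤ 0)]
    nlinarith
  rw [max_eq_left (by linarith : 0 ≤ t - r)]
  have hmax : max (r * t - (1 + r ^ 2)) 0 ^ 2 ≤ (r * t - (1 + r ^ 2)) ^ 2 := by
    rw [← sq_abs (r * t - _)]
    gcongr
    exact max_le (le_abs_self _) (abs_nonneg _)
  linear_combination hmax

lemma le_comparisonPotential (hr : 0 ≤ r) (x : ℝ) :
    max (|x| - r) 0 ^ 2 / 2 ≤ comparisonPotential r x := by
  rw [comparisonPotential, ← sq_abs x, abs_mul, abs_of_nonneg hr, le_div_iff₀ (by positivity)]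
  generalize |x| = t
  rcases le_total t r with ht | ht
  · rw [max_eq_right (by linarith : t - r ≤ 0)]
    simp only [ne_eq, OfNat.ofNat_ne_zero, not_false_eq_true, zero_pow, zero_div, zero_mul]
    positivity
  have hrt : r * r ≤ r * t := by gcongr
  rw [max_eq_left (by linarith : 0 ≤ t - r)]
  have hmax : (r * t - (1 + r ^ 2)) ^ 2 - 1 ≤ max (r * t - (1 + r ^ 2)) 0 ^ 2 := by
    rcases le_total 0 (r * t - (1 + r ^ 2)) with h | h
    · rw [max_eq_left h]
      linarith
    · rw [max_eq_right h]
      nlinarith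
  nlinarith

end ComparisonPotential

section Ball

lemma infDist_closedBall {E : Type*} [NormedAddCommGroup E] [NormedSpace ℝ E] {r : ℝ} (hr : 0 ≤ r)
    (c x : E) : Metric.infDist x (Metric.closedBall c r) = max (dist x c - r) 0 := by
  rw [Metric.infDist, ← Metric.cthickening_singleton c hr, infEDist_cthickening,
    Metric.infEDist_singleton, edist_dist, ← ENNReal.ofReal_sub _ hr]
  exact ENNReal.toReal_ofReal'

variable {r : ℝ}

lemma setIntegral_Ioi_exp_neg_max_sub_sq (r : ℝ) :
    ∫ x in Ioi r, exp (-(max (x - r) 0 ^ 2 / 2)) = √(2 * π) / 2 :=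
  calc ∫ x in Ioi r, exp (-(max (x - r) 0 ^ 2 / 2))
    _ = ∫ x in (· - r) ⁻¹' Ioi 0, exp (-(1 / 2) * (x - r) ^ 2) := by
      rw [preimage_sub_const_Ioi, zero_add]
      refine setIntegral_congr_fun measurableSet_Ioi fun x hx ↦ ?_
      simp only [max_eq_left (sub_nonneg.2 (mem_Ioi.1 hx).le)]
      ring_nf
    _ = ∫ y in Ioi 0, exp (-(1 / 2) * y ^ 2) :=
      (measurePreserving_sub_right volume r).setIntegral_preimage_emb
        (measurableEmbedding_subRight r) (fun y ↦ exp (-(1 / 2) * y ^ 2)) (Ioi 0)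
    _ = √(2 * π) / 2 := by rw [integral_gaussian_Ioi, div_div_eq_mul_div, div_one, mul_comm π]

lemma integral_exp_neg_max_abs_sub_sq (hr : 0 ≤ r) :
    ∫ x, exp (-(max (|x| - r) 0 ^ 2 / 2)) = 2 * r + √(2 * π) := by
  have hcont : Continuous fun x ↦ exp (-(max (x - r) 0 ^ 2 / 2)) := by fun_prop
  have htail := setIntegral_Ioi_exp_neg_max_sub_sq r
  have hflat : ∫ x in Ioc 0 r, exp (-(max (x - r) 0 ^ 2 / 2)) = r := by
    have : EqOn (fun x ↦ exp (-(max (x - r) 0 ^ 2 / 2))) 1 (Ioc 0 r) := fun x hx ↦ by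
      simp [hx.2]
    rw [setIntegral_congr_fun measurableSet_Ioc this]
    simp [hr]
  rw [integral_comp_abs (f := fun x ↦ exp (-(max (x - r) 0 ^ 2 / 2))),
    ← Ioc_union_Ioi_eq_Ioi hr, setIntegral_union (Ioc_disjoint_Ioi le_rfl) measurableSet_Ioi
      hcont.integrableOn_Ioc (.of_integral_ne_zero (htail ▸ by positivity)), hflat, htail]
  ring

lemma integral_exp_neg_infDist_closedBall_sq (hr : 0 ≤ r) (c : ℝ) :
    ∫ x, exp (-(Metric.infDist x (Metric.closedBall c r) ^ 2 / 2)) = 2 * r + √(2 * π) := by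
  simp only [infDist_closedBall hr, dist_eq]
  rw [integral_sub_right_eq_self (fun x ↦ exp (-(max (|x| - r) 0 ^ 2 / 2))) c,
    integral_exp_neg_max_abs_sub_sq hr]

theorem satisfiesLogSobolev_tilted_infDist_closedBall (hr : 0 ≤ r) (c : ℝ) :
    SatisfiesLogSobolev
      (volume.tilted fun x ↦ -(Metric.infDist x (Metric.closedBall c r) ^ 2 / 2))
      (exp (1 / 2) * (1 + r ^ 2)) := by
  set V : ℝ → ℝ := fun x ↦ Metric.infDist x (Metric.closedBall c r) ^ 2 / 2 with hV
  set W : ℝ → ℝ := fun x ↦ comparisonPotential r (x - c)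
  have hVc : Continuous V := by fun_prop
  have hWd : ContDiff ℝ 1 W :=
    (contDiff_comparisonPotential r).comp (by fun_prop : ContDiff ℝ 1 fun x : ℝ ↦ x - c)
  have hWconv : StrongConvexOn univ (1 + r ^ 2)⁻¹ W :=
    strongConvexOn_comp_sub_const (strongConvexOn_comparisonPotential r) c
  have hκ : 0 < (1 + r ^ 2)⁻¹ := by positivity
  have hVW (x : ℝ) : V x = max (|x - c| - r) 0 ^ 2 / 2 := by
    simp only [hV, infDist_closedBall hr, dist_eq]
  have hlower (x : ℝ) : 0 ≤ W x - V x :=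
    sub_nonneg.2 (hVW x ▸ le_comparisonPotential hr (x - c))
  have hupper (x : ℝ) : W x - V x ≤ 1 / 2 :=
    sub_le_iff_le_add'.2 (hVW x ▸ comparisonPotential_le hr (x - c))
  have htilted : (volume.tilted fun x ↦ -W x).tilted (fun x ↦ W x - V x) =
      volume.tilted fun x ↦ -V x := by
    rw [tilted_tilted (integrable_exp_neg_of_strongConvexOn hκ
      (hWd.differentiable one_ne_zero) hWconv)]
    congr with x
    simp only [Pi.add_apply]
    ring
  have := (satisfiesLogSobolev_tilted_of_strongConvexOn hκ hWd hWconv).tilted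
    (φ := fun x ↦ W x - V x) (by positivity)
    (hWd.continuous.sub hVc).measurable hlower hupper
  rwa [htilted, inv_inv, sub_zero] at this

end Ball

section SmoothedUniform

variable {m : ℝ}

lemma smUnif_nonneg (hm : 0 ≤ m) (x : ℝ) : 0 ≤ smUnif m x := by
  unfold smUnif
  positivity

lemma smUnif_eq_exp_div_integral (hm : 0 ≤ m) (x : ℝ) :
    smUnif m x =
      exp (-(Metric.infDist x (Metric.closedBall (m / 2) (3 * m / 2)) ^ 2 / 2)) /
        ∫ y, exp (-(Metric.infDist y (Metric.closedBall (m / 2) (3 * m / 2)) ^ 2 / 2)) := by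
  rw [integral_exp_neg_infDist_closedBall_sq (by positivity), closedBall_eq_Icc, smUnif]
  ring_nf

lemma integral_mul_smUnif (hm : 0 ≤ m) (g : ℝ → ℝ) :
    ∫ x, g x * smUnif m x =
      ∫ x, g x ∂volume.tilted fun x ↦
        -(Metric.infDist x (Metric.closedBall (m / 2) (3 * m / 2)) ^ 2 / 2) := by
  simp only [integral_tilted, smul_eq_mul, smUnif_eq_exp_div_integral hm, mul_comm (g _)]

theorem smoothed_uniform_log_sobolev_general (hm : 0 ≤ m) {f : ℝ → ℝ} (hf : ContDiff ℝ 1 f)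
    (hcs : HasCompactSupport f) :
    ∫ x, f x ^ 2 * log (f x ^ 2 / ∫ y, f y ^ 2 * smUnif m y) * smUnif m x ≤
      2 * (exp (1 / 2) * (1 + (3 * m / 2) ^ 2)) * ∫ x, deriv f x ^ 2 * smUnif m x := by
  have hr : 0 ≤ 3 * m / 2 := by positivity
  have hexp : Integrable fun x ↦
      exp (-(Metric.infDist x (Metric.closedBall (m / 2) (3 * m / 2)) ^ 2 / 2)) :=
    .of_integral_ne_zero (integral_exp_neg_infDist_closedBall_sq hr _ ▸ by positivity)
  have := isProbabilityMeasure_tilted hexp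
  simpa only [integral_mul_smUnif hm, entropy, average_eq_integral] using
    satisfiesLogSobolev_tilted_infDist_closedBall hr (m / 2) f hf hcs

lemma exp_half_mul_one_add_sq_le (hm : 1 ≤ m) :
    exp (1 / 2) * (1 + (3 * m / 2) ^ 2) ≤ 16 * m ^ 2 := by
  have hexp : exp (1 / 2) ≤ 3 :=
    (exp_le_exp.2 (by norm_num : (1 / 2 : ℝ) ≤ 1)).trans (exp_one_lt_d9.le.trans (by norm_num))
  calc exp (1 / 2) * (1 + (3 * m / 2) ^ 2)
    _ ≤ 3 * (1 + (3 * m / 2) ^ 2) := by gcongr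
    _ ≤ 16 * m ^ 2 := by nlinarith

end SmoothedUniform

/-- For m ≥ 4, the smoothed uniform density u_m on [−m, 2m]
satisfies a log-Sobolev inequality with constant 16m². -/
theorem smoothed_uniform_log_sobolev
    (m : ℝ) (hm : 4 ≤ m) :
    ∀ f : ℝ → ℝ, ContDiff ℝ (⊤ : ℕ∞) f → HasCompactSupport f →
      (∫ x, (f x) ^ 2 * Real.log ((f x) ^ 2 / ∫ y, (f y) ^ 2 * smUnif m y) * smUnif m x)
        ≤ 2 * (16 * m ^ 2) * ∫ x, (deriv f x) ^ 2 * smUnif m x := by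
  intro f hf hcs
  have henergy : 0 ≤ ∫ x, deriv f x ^ 2 * smUnif m x :=
    integral_nonneg fun x ↦ mul_nonneg (sq_nonneg _) (smUnif_nonneg (by linarith) x)
  have hconst : exp (1 / 2) * (1 + (3 * m / 2) ^ 2) ≤ 16 * m ^ 2 :=
    exp_half_mul_one_add_sq_le (by linarith)
  exact (smoothed_uniform_log_sobolev_general (by linarith) (hf.of_le (mod_cast le_top)) hcs).trans
    (by gcongr)
end

section
/- Let m ≥ 11, let ν(x) = (2π)^{−1/2} e^{−x²/2}, and let π(x) = (1/2)ν(x) + (1/2) g_m(x) where g_m(x) = (2π)^{−1/2} e^{−(x−m)²/2}. For λ ∈ [0,1], let μ_λ be the probability density proportional to ν^{1−λ} π^λ. Then the mass of μ_λ on the interval [m/4, 3m/4] satisfies μ_λ([m/4, 3m/4]) = ( ∫_{m/4}^{3m/4} ν^{1−λ} π^λ dx ) / ( ∫_ℝ ν^{1−λ} π^λ dx ) ≤ 6 e^{−m²/32}. -/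
/-!
Each `x ∈ ℝ` satisfies `π x ≥ ν x / 2`, so the integral of `ν ^ (1 - λ) π ^ λ` over `ℝ` is at
least `2 ^ (-λ) ≥ 1 / 2`. By weighted AM-GM its integral over a set `s` is at most
`(1 - λ) ν(s) + λ π(s)`. When `s` is invariant under the reflection `x ↦ m - x`, which exchanges
the two modes, `π(s) = ν(s)`. Hence `μ_λ(s) ≤ 2 ν(s)`, and for `s = [a, m - a]` the Gaussian tail
bound `ν([a, ∞)) ≤ exp (-a ^ 2 / 2) / 2` gives `μ_λ(s) ≤ exp (-a ^ 2 / 2)`.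
-/

open MeasureTheory Real

/-- The standard Gaussian density on ℝ. -/
noncomputable def stdGauss (x : ℝ) : ℝ := Real.exp (-x ^ 2 / 2) / Real.sqrt (2 * Real.pi)

/-- The density of N(m, 1). -/
noncomputable def gaussAt (m x : ℝ) : ℝ := Real.exp (-(x - m) ^ 2 / 2) / Real.sqrt (2 * Real.pi)

/-- The bimodal target π = (1/2)N(0,1) + (1/2)N(m,1). -/
noncomputable def bimodal (m x : ℝ) : ℝ := (1 / 2) * stdGauss x + (1 / 2) * gaussAt m x

open ProbabilityTheory Set
open scoped NNReal

section GeomTempering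

variable {α : Type*} {f g : α → ℝ} {lam c : ℝ}

/-- The unnormalized geometric tempering `f ^ (1 - lam) * g ^ lam` between the densities `f` (at
`lam = 0`) and `g` (at `lam = 1`). The normalizing constant is left out, so that probabilities are
quotients of integrals of `geomTempering f g lam`. -/
noncomputable def geomTempering (f g : α → ℝ) (lam : ℝ) (x : α) : ℝ :=
  f x ^ (1 - lam) * g x ^ lam

lemma geomTempering_nonneg {x : α} (hf : 0 ≤ f x) (hg : 0 ≤ g x) :
    0 ≤ geomTempering f g lam x :=
  mul_nonneg (rpow_nonneg hf _) (rpow_nonneg hg _)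

lemma geomTempering_le_arith_mean {x : α} (hf : 0 ≤ f x) (hg : 0 ≤ g x)
    (hlam : lam ∈ Icc (0 : ℝ) 1) :
    geomTempering f g lam x ≤ (1 - lam) * f x + lam * g x :=
  geom_mean_le_arith_mean2_weighted (sub_nonneg.2 hlam.2) hlam.1 hf hg (sub_add_cancel 1 lam)

lemma rpow_mul_le_geomTempering {x : α} (hc : 0 ≤ c) (hf : 0 ≤ f x) (hfg : c * f x ≤ g x)
    (hlam : lam ∈ Icc (0 : ℝ) 1) :
    c ^ lam * f x ≤ geomTempering f g lam x :=
  calc c ^ lam * f x = f x ^ (1 - lam) * (c * f x) ^ lam := by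
        rw [mul_rpow hc hf, mul_left_comm,
          ← rpow_add_of_nonneg hf (sub_nonneg.2 hlam.2) hlam.1, sub_add_cancel, rpow_one]
    _ ≤ f x ^ (1 - lam) * g x ^ lam := by
        have := hlam.1
        gcongr

variable [MeasurableSpace α] {μ : Measure α}

lemma integrable_geomTempering (hf : Integrable f μ) (hg : Integrable g μ)
    (hf₀ : 0 ≤ᵐ[μ] f) (hg₀ : 0 ≤ᵐ[μ] g) (hlam : lam ∈ Icc (0 : ℝ) 1) :
    Integrable (geomTempering f g lam) μ := by
  have hmeas : AEMeasurable (geomTempering f g lam) μ :=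
    (hf.aemeasurable.pow_const _).mul (hg.aemeasurable.pow_const _)
  refine ((hf.const_mul (1 - lam)).add (hg.const_mul lam)).mono' hmeas.aestronglyMeasurable ?_
  filter_upwards [hf₀, hg₀] with x hfx hgx
  rw [norm_of_nonneg (geomTempering_nonneg hfx hgx)]
  exact geomTempering_le_arith_mean hfx hgx hlam

lemma integral_geomTempering_le_arith_mean (hf : Integrable f μ) (hg : Integrable g μ)
    (hf₀ : 0 ≤ᵐ[μ] f) (hg₀ : 0 ≤ᵐ[μ] g) (hlam : lam ∈ Icc (0 : ℝ) 1) :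
    ∫ x, geomTempering f g lam x ∂μ ≤ (1 - lam) * (∫ x, f x ∂μ) + lam * ∫ x, g x ∂μ := by
  rw [← integral_const_mul, ← integral_const_mul,
    ← integral_add (hf.const_mul _) (hg.const_mul _)]
  refine integral_mono_ae (integrable_geomTempering hf hg hf₀ hg₀ hlam)
    ((hf.const_mul _).add (hg.const_mul _)) ?_
  filter_upwards [hf₀, hg₀] with x hfx hgx
  exact geomTempering_le_arith_mean hfx hgx hlam

lemma rpow_mul_integral_le_integral_geomTempering (hf : Integrable f μ) (hg : Integrable g μ)
    (hf₀ : 0 ≤ᵐ[μ] f) (hc : 0 ≤ c) (hfg : ∀ᵐ x ∂μ, c * f x ≤ g x)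
    (hlam : lam ∈ Icc (0 : ℝ) 1) :
    c ^ lam * ∫ x, f x ∂μ ≤ ∫ x, geomTempering f g lam x ∂μ := by
  have hg₀ : 0 ≤ᵐ[μ] g := by
    filter_upwards [hf₀, hfg] with x hfx hfgx using (mul_nonneg hc hfx).trans hfgx
  rw [← integral_const_mul]
  refine integral_mono_ae (hf.const_mul _) (integrable_geomTempering hf hg hf₀ hg₀ hlam) ?_
  filter_upwards [hf₀, hfg] with x hfx hfgx
  exact rpow_mul_le_geomTempering hc hfx hfgx hlam

end GeomTempering

section GaussianTail

lemma setIntegral_Ioi_comp_add_right {E : Type*} [NormedAddCommGroup E] [NormedSpace ℝ E]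
    (f : ℝ → E) (a b : ℝ) : ∫ x in Ioi b, f (x + a) = ∫ x in Ioi (b + a), f x := by
  simpa using (measurePreserving_add_right volume a).setIntegral_preimage_emb
    (measurableEmbedding_addRight a) f (Ioi (b + a))

lemma setIntegral_Ioi_mean_gaussianPDFReal (μ : ℝ) {v : ℝ≥0} (hv : v ≠ 0) :
    ∫ x in Ioi μ, gaussianPDFReal μ v x = 1 / 2 := by
  have hv' : (v : ℝ) ≠ 0 := by exact_mod_cast hv
  calc ∫ x in Ioi μ, gaussianPDFReal μ v x
      = ∫ x in Ioi 0, gaussianPDFReal μ v (x + μ) := by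
        rw [setIntegral_Ioi_comp_add_right, zero_add]
    _ = (√(2 * π * v))⁻¹ * ∫ x in Ioi 0, exp (-(1 / (2 * v)) * x ^ 2) := by
        rw [← integral_const_mul]
        congr 1 with x
        rw [gaussianPDFReal, add_sub_cancel_right]
        congr 2
        ring
    _ = (√(2 * π * v))⁻¹ * (√(2 * π * v) / 2) := by
        rw [integral_gaussian_Ioi]
        congr 3
        field_simp
    _ = 1 / 2 := by
        field_simp

lemma gaussianPDFReal_add_le {μ x a : ℝ} (v : ℝ≥0) (hx : μ ≤ x) (ha : 0 ≤ a) :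
    gaussianPDFReal μ v (x + a) ≤ exp (-a ^ 2 / (2 * v)) * gaussianPDFReal μ v x := by
  have hsq : -(x + a - μ) ^ 2 ≤ -a ^ 2 + -(x - μ) ^ 2 := by
    nlinarith [mul_nonneg (sub_nonneg.2 hx) ha]
  rw [gaussianPDFReal, gaussianPDFReal, mul_left_comm, ← exp_add, ← add_div]
  gcongr

lemma setIntegral_Ioi_gaussianPDFReal_le (μ : ℝ) {v : ℝ≥0} (hv : v ≠ 0) {a : ℝ} (ha : 0 ≤ a) :
    ∫ x in Ioi (μ + a), gaussianPDFReal μ v x ≤ exp (-a ^ 2 / (2 * v)) / 2 :=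
  calc ∫ x in Ioi (μ + a), gaussianPDFReal μ v x
      = ∫ x in Ioi μ, gaussianPDFReal μ v (x + a) :=
        (setIntegral_Ioi_comp_add_right _ a μ).symm
    _ ≤ ∫ x in Ioi μ, exp (-a ^ 2 / (2 * v)) * gaussianPDFReal μ v x :=
        setIntegral_mono_on ((integrable_gaussianPDFReal μ v).comp_add_right a).integrableOn
          ((integrable_gaussianPDFReal μ v).const_mul _).integrableOn measurableSet_Ioi
          fun _ hx => gaussianPDFReal_add_le v (mem_Ioi.1 hx).le ha
    _ = exp (-a ^ 2 / (2 * v)) / 2 := by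
        rw [integral_const_mul, setIntegral_Ioi_mean_gaussianPDFReal μ hv, mul_one_div]

end GaussianTail

lemma gaussAt_eq_gaussianPDFReal (m : ℝ) : gaussAt m = gaussianPDFReal m 1 := by
  ext x
  simp [gaussAt, gaussianPDFReal, div_eq_inv_mul]

lemma stdGauss_eq_gaussianPDFReal : stdGauss = gaussianPDFReal 0 1 := by
  ext x
  simp [stdGauss, gaussianPDFReal, div_eq_inv_mul]

lemma stdGauss_nonneg (x : ℝ) : 0 ≤ stdGauss x := by
  unfold stdGauss
  positivity

lemma gaussAt_nonneg (m x : ℝ) : 0 ≤ gaussAt m x := by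
  unfold gaussAt
  positivity

lemma half_stdGauss_le_bimodal (m x : ℝ) : 1 / 2 * stdGauss x ≤ bimodal m x :=
  le_add_of_nonneg_right (mul_nonneg one_half_pos.le (gaussAt_nonneg m x))

lemma bimodal_nonneg (m x : ℝ) : 0 ≤ bimodal m x :=
  (mul_nonneg one_half_pos.le (stdGauss_nonneg x)).trans (half_stdGauss_le_bimodal m x)

lemma integrable_stdGauss : Integrable stdGauss :=
  stdGauss_eq_gaussianPDFReal ▸ integrable_gaussianPDFReal 0 1

lemma integral_stdGauss : ∫ x, stdGauss x = 1 := by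
  rw [stdGauss_eq_gaussianPDFReal, integral_gaussianPDFReal_eq_one 0 one_ne_zero]

lemma integrable_gaussAt (m : ℝ) : Integrable (gaussAt m) :=
  gaussAt_eq_gaussianPDFReal m ▸ integrable_gaussianPDFReal m 1

lemma integrable_bimodal (m : ℝ) : Integrable (bimodal m) :=
  (integrable_stdGauss.const_mul _).add ((integrable_gaussAt m).const_mul _)

lemma stdGauss_sub_left (m x : ℝ) : stdGauss (m - x) = gaussAt m x := by
  rw [stdGauss, gaussAt, sub_sq_comm]

lemma setIntegral_bimodal_of_preimage_sub_left {m : ℝ} {s : Set ℝ} (hs : (m - ·) ⁻¹' s = s) :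
    ∫ x in s, bimodal m x = ∫ x in s, stdGauss x := by
  have hreflect : ∫ x in s, gaussAt m x = ∫ x in s, stdGauss x := by
    simpa only [hs, stdGauss_sub_left] using
      (Measure.measurePreserving_sub_left volume m).setIntegral_preimage_emb
        (MeasurableEquiv.subLeft m).measurableEmbedding stdGauss s
  simp only [bimodal]
  rw [integral_add (integrable_stdGauss.const_mul _).integrableOn
    ((integrable_gaussAt m).const_mul _).integrableOn, integral_const_mul, integral_const_mul,
    hreflect]
  ring

lemma setIntegral_Icc_stdGauss_le {a : ℝ} (ha : 0 ≤ a) (b : ℝ) :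
    ∫ x in Icc a b, stdGauss x ≤ exp (-a ^ 2 / 2) / 2 :=
  calc ∫ x in Icc a b, stdGauss x = ∫ x in Ioc a b, stdGauss x := integral_Icc_eq_integral_Ioc
    _ ≤ ∫ x in Ioi a, stdGauss x :=
        setIntegral_mono_set integrable_stdGauss.integrableOn (ae_of_all _ stdGauss_nonneg)
          Ioc_subset_Ioi_self.eventuallyLE
    _ ≤ exp (-a ^ 2 / 2) / 2 := by
        simpa [stdGauss_eq_gaussianPDFReal] using
          setIntegral_Ioi_gaussianPDFReal_le 0 one_ne_zero ha

lemma half_le_integral_geomTempering_bimodal (m : ℝ) {lam : ℝ} (hlam : lam ∈ Icc (0 : ℝ) 1) :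
    1 / 2 ≤ ∫ x, geomTempering stdGauss (bimodal m) lam x :=
  calc (1 / 2 : ℝ) ≤ (1 / 2) ^ lam :=
        self_le_rpow_of_le_one one_half_pos.le one_half_lt_one.le hlam.2
    _ = (1 / 2) ^ lam * ∫ x, stdGauss x := by rw [integral_stdGauss, mul_one]
    _ ≤ ∫ x, geomTempering stdGauss (bimodal m) lam x :=
        rpow_mul_integral_le_integral_geomTempering integrable_stdGauss (integrable_bimodal m)
          (ae_of_all _ stdGauss_nonneg) one_half_pos.le
          (ae_of_all _ (half_stdGauss_le_bimodal m)) hlam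

lemma setIntegral_geomTempering_bimodal_le {m lam : ℝ} (hlam : lam ∈ Icc (0 : ℝ) 1) {s : Set ℝ}
    (hs : (m - ·) ⁻¹' s = s) :
    ∫ x in s, geomTempering stdGauss (bimodal m) lam x ≤ ∫ x in s, stdGauss x :=
  calc ∫ x in s, geomTempering stdGauss (bimodal m) lam x
      ≤ (1 - lam) * (∫ x in s, stdGauss x) + lam * ∫ x in s, bimodal m x :=
        integral_geomTempering_le_arith_mean integrable_stdGauss.integrableOn
          (integrable_bimodal m).integrableOn (ae_of_all _ stdGauss_nonneg)
          (ae_of_all _ (bimodal_nonneg m)) hlam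
    _ = ∫ x in s, stdGauss x := by
        rw [setIntegral_bimodal_of_preimage_sub_left hs]
        ring

theorem bimodal_tempering_middle_mass_bound_general
    (m : ℝ) {a lam : ℝ} (ha : 0 ≤ a) (hlam : lam ∈ Icc (0 : ℝ) 1) :
    (∫ x in Icc a (m - a), stdGauss x ^ (1 - lam) * bimodal m x ^ lam)
        / (∫ x, stdGauss x ^ (1 - lam) * bimodal m x ^ lam)
      ≤ exp (-a ^ 2 / 2) := by
  have hsymm : (m - ·) ⁻¹' Icc a (m - a) = Icc a (m - a) := by simp
  have hden := half_le_integral_geomTempering_bimodal m hlam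
  have hnum := (setIntegral_geomTempering_bimodal_le hlam hsymm).trans
    (setIntegral_Icc_stdGauss_le ha (m - a))
  calc _ ≤ exp (-a ^ 2 / 2) / 2 / (1 / 2) :=
        div_le_div₀ (by positivity) hnum one_half_pos hden
    _ = exp (-a ^ 2 / 2) := by ring

/-- For m ≥ 11, ν = N(0,1), π = (1/2)N(0,1) + (1/2)N(m,1) and λ ∈ [0,1],
the geometric tempering μ_λ ∝ ν^{1−λ}π^λ puts mass at most 6e^{−m²/32} on [m/4, 3m/4]. -/
theorem bimodal_tempering_middle_mass_bound
    (m : ℝ) (hm : 11 ≤ m) (lam : ℝ) (hlam : lam ∈ Set.Icc (0 : ℝ) 1) :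
    (∫ x in Set.Icc (m / 4) (3 * m / 4), (stdGauss x) ^ (1 - lam) * (bimodal m x) ^ lam)
        / (∫ x, (stdGauss x) ^ (1 - lam) * (bimodal m x) ^ lam)
      ≤ 6 * Real.exp (-m ^ 2 / 32) := by
  have hmass := bimodal_tempering_middle_mass_bound_general m (a := m / 4) (by linarith) hlam
  rw [show m - m / 4 = 3 * m / 4 by ring, show -(m / 4) ^ 2 / 2 = -m ^ 2 / 32 by ring] at hmass
  linarith [exp_pos (-m ^ 2 / 32)]
end
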